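/- Let p > 3 be a prime, m a positive integer, and n = 2m, and suppose p^m ≡ 2 (mod 3). For the power mapping F(x) = x^{p^m+2} over F_{p^n}, the number of b ∈ F_{p^n} with δ(b) = 2 is exactly p^m - 1, i.e., ω_2 = p^m - 1. -/

import Mathlib

/-- The number of `x` in the field `F` with `(x+1)^d - x^d = b`. -/
def deltaF (F : Type*) [Field F] [Fintype F] [DecidableEq F] (d : ℕ) (b : F) : ℕ :=
  (Finset.univ.filter (fun x : F => (x + 1) ^ d - x ^ d = b)).card

/-- The number of `b` in the field `F` with `deltaF F d b = i`. -/
def omegaF (F : Type*) [Field F] [Fintype F] [DecidableEq F] (d i : ℕ) : ℕ :=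
  (Finset.univ.filter (fun b : F => deltaF F d b = i)).card

section CubeRoot

variable {K F : Type*} [Field K] [Field F] [Algebra K F]

theorem exists_sq_add_self_add_one_eq_zero [Fintype F] (h : 3 ∣ Fintype.card F - 1) :
    ∃ z : F, z ^ 2 + z + 1 = 0 := by
  classical
  have : Fact (Nat.Prime 3) := ⟨Nat.prime_three⟩
  obtain ⟨g, hg⟩ := exists_prime_orderOf_dvd_card (G := Fˣ) 3 (by rwa [Fintype.card_units])
  have hcube : (g : F) ^ 3 = 1 := by
    rw [← Units.val_pow_eq_pow_val, ← hg, pow_orderOf_eq_one, Units.val_one]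
  have hne : (g : F) ≠ 1 := by
    intro h1
    rw [Units.val_eq_one.mp h1, orderOf_one] at hg
    omega
  refine ⟨g, (mul_eq_zero.mp ?_).resolve_left (sub_ne_zero.mpr hne)⟩
  linear_combination hcube

theorem sq_add_self_add_one_ne_zero [Fintype K] (hq : Fintype.card K % 3 = 2) (h3 : (3 : K) ≠ 0)
    (z : K) : z ^ 2 + z + 1 ≠ 0 := by
  intro hz
  have hcube : z ^ 3 = 1 := by linear_combination (z - 1) * hz
  have hz2 : z = z ^ 2 := by
    conv_lhs => rw [← FiniteField.pow_card z, ← Nat.div_add_mod (Fintype.card K) 3, hq, pow_add,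
      pow_mul, hcube, one_pow, one_mul]
  have hz1 : z = 1 := by linear_combination (1 + z) * hz2 + hcube
  subst hz1
  exact h3 (by linear_combination hz)

theorem linearIndependent_one_cubeRoot {ζ : F} (hK : ∀ z : K, z ^ 2 + z + 1 ≠ 0)
    (hζ : ζ ^ 2 + ζ + 1 = 0) {a b : K} (h : algebraMap K F a + algebraMap K F b * ζ = 0) :
    a = 0 ∧ b = 0 := by
  have hb : b = 0 := by
    by_contra hb
    have hb' : algebraMap K F b ≠ 0 := by simpa using hb
    have hz : ζ = algebraMap K F (-a / b) := by
      rw [map_div₀, map_neg, eq_div_iff hb']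
      linear_combination h
    apply hK (-a / b)
    apply (algebraMap K F).injective
    rw [map_zero, ← hζ, hz]
    simp
  subst hb
  simpa using h

theorem bijective_mul_cubeRoot_add [Fintype K] [Fintype F]
    (hcard : Fintype.card F = Fintype.card K ^ 2) {ζ : F} (hK : ∀ z : K, z ^ 2 + z + 1 ≠ 0)
    (hζ : ζ ^ 2 + ζ + 1 = 0) :
    Function.Bijective
      (fun v : K × K ↦ algebraMap K F v.1 * ζ + algebraMap K F v.2 * ζ ^ 2) := by
  rw [Fintype.bijective_iff_injective_and_card]
  refine ⟨?_, by rw [hcard, Fintype.card_prod, sq]⟩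
  rintro ⟨a, b⟩ ⟨c, d⟩ h
  dsimp only at h
  obtain ⟨h1, h2⟩ := linearIndependent_one_cubeRoot (a := d - b) (b := a - b - (c - d)) hK hζ (by
    simp only [map_sub]
    linear_combination h - (algebraMap K F b - algebraMap K F d) * hζ)
  rw [Prod.mk.injEq]
  constructor
  · linear_combination h2 - h1
  · linear_combination -h1

theorem bijective_mul_two_add_cubeRoot [Fintype K] [Fintype F] (h3 : (3 : K) ≠ 0)
    (hcard : Fintype.card F = Fintype.card K ^ 2) {ζ : F} (hK : ∀ z : K, z ^ 2 + z + 1 ≠ 0)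
    (hζ : ζ ^ 2 + ζ + 1 = 0) (c₀ : F) :
    Function.Bijective
      (fun v : K × K ↦ algebraMap K F v.1 * (2 + ζ ^ 2) + algebraMap K F v.2 * (2 + ζ) + c₀) := by
  rw [Fintype.bijective_iff_injective_and_card]
  refine ⟨?_, by rw [hcard, Fintype.card_prod, sq]⟩
  rintro ⟨a, b⟩ ⟨c, d⟩ h
  dsimp only at h
  obtain ⟨h1, h2⟩ := linearIndependent_one_cubeRoot
    (a := a + 2 * b - (c + 2 * d)) (b := b - a - (d - c)) hK hζ (by
    simp only [map_sub, map_add, map_mul, map_ofNat]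
    linear_combination h - (algebraMap K F a - algebraMap K F c) * hζ)
  have hb : b = d := by
    apply mul_left_cancel₀ h3
    linear_combination h1 + h2
  rw [Prod.mk.injEq]
  exact ⟨by linear_combination h1 - 2 * hb, hb⟩

theorem pow_card_cubeRoot_combination [Fintype K] (hq : Fintype.card K % 3 = 2) {ζ : F}
    (hζ : ζ ^ 2 + ζ + 1 = 0) (u v : K) :
    (algebraMap K F u * ζ + algebraMap K F v * ζ ^ 2) ^ Fintype.card K =
      algebraMap K F u * ζ ^ 2 + algebraMap K F v * ζ := by
  have hcube : ζ ^ 3 = 1 := by linear_combination (ζ - 1) * hζ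
  have hfrob : ζ ^ Fintype.card K = ζ ^ 2 := by
    rw [← Nat.div_add_mod (Fintype.card K) 3, hq, pow_add, pow_mul, hcube, one_pow, one_mul]
  have := map_add (FiniteField.frobeniusAlgHom K F) (algebraMap K F u * ζ)
    (algebraMap K F v * ζ ^ 2)
  simp only [FiniteField.coe_frobeniusAlgHom] at this
  rw [this, mul_pow, mul_pow, ← map_pow, ← map_pow, FiniteField.pow_card, FiniteField.pow_card,
    ← pow_mul, mul_comm 2, pow_mul, hfrob]
  linear_combination algebraMap K F v * ζ * hcube

theorem add_one_pow_card_add_two_sub [Fintype K] (h2 : (2 : F) ≠ 0) (x y y' : F)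
    (hx : x = y - 1 / 2) (hy : y ^ Fintype.card K = y') :
    (x + 1) ^ (Fintype.card K + 2) - x ^ (Fintype.card K + 2) = y ^ 2 + 2 * y * y' + 1 / 4 := by
  have hx' : x ^ Fintype.card K = y' - 1 / 2 := by
    have h := map_sub (FiniteField.frobeniusAlgHom K F) y (algebraMap K F (1 / 2))
    have hhalf : algebraMap K F (1 / 2) = 1 / 2 := by
      rw [map_div₀, map_one, map_ofNat]
    rw [AlgHom.commutes, hhalf] at h
    simp only [FiniteField.coe_frobeniusAlgHom] at h
    rw [hx, h, hy]
  have hx1 : (x + 1) ^ Fintype.card K = x ^ Fintype.card K + 1 := by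
    have h := map_add (FiniteField.frobeniusAlgHom K F) x 1
    rwa [map_one] at h
  have h4 : (4 : F) ≠ 0 := by
    rw [show (4 : F) = 2 * 2 by norm_num]
    exact mul_ne_zero h2 h2
  rw [pow_add, pow_add, hx1, hx', hx]
  field_simp
  ring

end CubeRoot

section SquareRoots

variable {K : Type*} [Field K] [Fintype K] [DecidableEq K]

theorem card_sqrt_eq_one_iff (h2 : (2 : K) ≠ 0) (a : K) :
    (Finset.univ.filter (fun u : K ↦ u ^ 2 = a)).card = 1 ↔ a = 0 := by
  constructor
  · intro h
    obtain ⟨u, hu⟩ := Finset.card_eq_one.mp h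
    have hmem : u ∈ Finset.univ.filter (fun u : K ↦ u ^ 2 = a) := by simp [hu]
    have hneg : -u ∈ Finset.univ.filter (fun u : K ↦ u ^ 2 = a) := by simpa using hmem
    rw [hu, Finset.mem_singleton] at hneg
    have hu0 : u = 0 := by
      apply (mul_eq_zero.mp _).resolve_left h2
      linear_combination -hneg
    simpa [hu0, eq_comm] using hmem
  · rintro rfl
    simp [Finset.filter_eq']

theorem card_sqrt_le_two (a : K) :
    (Finset.univ.filter (fun u : K ↦ u ^ 2 = a)).card ≤ 2 := by
  by_cases h : ∃ u : K, u ^ 2 = a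
  · obtain ⟨u, rfl⟩ := h
    refine (Finset.card_le_card ?_).trans (Finset.card_le_two (a := u) (b := -u))
    intro v hv
    simpa [sq_eq_sq_iff_eq_or_eq_neg] using hv
  · push Not at h
    simp [h]

theorem one_add_two_mul_card_two_sqrt (h2 : (2 : K) ≠ 0) :
    1 + 2 * (Finset.univ.filter (fun a : K ↦
      (Finset.univ.filter (fun u : K ↦ u ^ 2 = a)).card = 2)).card = Fintype.card K := by
  set s : K → ℕ := fun a ↦ (Finset.univ.filter (fun u : K ↦ u ^ 2 = a)).card with hs
  have hsum : ∑ a, s a = Fintype.card K :=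
    (Finset.card_eq_sum_card_fiberwise (f := fun u : K ↦ u ^ 2) (t := Finset.univ)
      (fun _ _ ↦ Finset.mem_coe.mpr (Finset.mem_univ _))).symm
  have hsplit : ∀ a, s a = (if a = 0 then 1 else 0) + 2 * (if s a = 2 then 1 else 0) := by
    intro a
    have h1 : s a = 1 ↔ a = 0 := card_sqrt_eq_one_iff h2 a
    have hle : s a ≤ 2 := card_sqrt_le_two a
    simp only [← h1]
    clear h1
    generalize s a = i at *
    interval_cases i <;> simp
  rw [← hsum, Finset.sum_congr rfl (fun a _ ↦ hsplit a), Finset.sum_add_distrib,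
    ← Finset.mul_sum, Finset.sum_ite_eq', Finset.card_filter]
  simp [hs]

theorem card_pairs_two_sqrt (h2 : (2 : K) ≠ 0) :
    (Finset.univ.filter (fun w : K × K ↦
      (Finset.univ.filter (fun v : K × K ↦ (v.1 ^ 2, v.2 ^ 2) = w)).card = 2)).card =
      Fintype.card K - 1 := by
  set s : K → ℕ := fun a ↦ (Finset.univ.filter (fun u : K ↦ u ^ 2 = a)).card with hs
  set T : Finset K := Finset.univ.filter (fun a ↦ s a = 2) with hT
  have hprod : ∀ w : K × K,
      (Finset.univ.filter (fun v : K × K ↦ (v.1 ^ 2, v.2 ^ 2) = w)).card = s w.1 * s w.2 := by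
    intro w
    rw [hs, ← Finset.card_product]
    congr 1
    ext v
    simp [Prod.ext_iff]
  have hunion : Finset.univ.filter (fun w : K × K ↦
      (Finset.univ.filter (fun v : K × K ↦ (v.1 ^ 2, v.2 ^ 2) = w)).card = 2) =
      {0} ×ˢ T ∪ T ×ˢ {0} := by
    ext ⟨a, b⟩
    have ha : s a = 1 ↔ a = 0 := card_sqrt_eq_one_iff h2 a
    have hb : s b = 1 ↔ b = 0 := card_sqrt_eq_one_iff h2 b
    have hla : s a ≤ 2 := card_sqrt_le_two a
    have hlb : s b ≤ 2 := card_sqrt_le_two b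
    simp only [hprod, Finset.mem_filter, Finset.mem_univ, true_and, Finset.mem_union,
      Finset.mem_product, Finset.mem_singleton, hT, ← ha, ← hb]
    clear ha hb
    generalize s a = i at *
    generalize s b = j at *
    interval_cases i <;> interval_cases j <;> simp
  have hdisj : Disjoint ({0} ×ˢ T) (T ×ˢ {0}) := by
    rw [Finset.disjoint_left]
    rintro ⟨a, b⟩ h h'
    simp only [Finset.mem_product, Finset.mem_singleton, hT, Finset.mem_filter] at h h'
    have h1 : s a = 1 := (card_sqrt_eq_one_iff h2 a).mpr h.1
    omega
  have hcount : 1 + 2 * T.card = Fintype.card K := one_add_two_mul_card_two_sqrt h2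
  rw [hunion, Finset.card_union_of_disjoint hdisj, Finset.card_product, Finset.card_product,
    Finset.card_singleton]
  omega

end SquareRoots

theorem omegaF_card_add_two {K F : Type*} [Field K] [Fintype K] [Field F] [Fintype F]
    [DecidableEq F] [Algebra K F] (hcard : Fintype.card F = Fintype.card K ^ 2)
    (hq : Fintype.card K % 3 = 2) (h2 : (2 : K) ≠ 0) (h3 : (3 : K) ≠ 0) :
    omegaF F (Fintype.card K + 2) 2 = Fintype.card K - 1 := by
  classical
  have h2F : (2 : F) ≠ 0 := by
    rw [← map_ofNat (algebraMap K F) 2]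
    simpa using h2
  have hK : ∀ z : K, z ^ 2 + z + 1 ≠ 0 := sq_add_self_add_one_ne_zero hq h3
  obtain ⟨ζ, hζ⟩ : ∃ z : F, z ^ 2 + z + 1 = 0 := by
    apply exists_sq_add_self_add_one_eq_zero
    have : Fintype.card K ^ 2 % 3 = 1 := by rw [Nat.pow_mod, hq]
    omega
  let φ : K × K ≃ F := (Equiv.ofBijective _ (bijective_mul_cubeRoot_add hcard hK hζ)).trans
    (Equiv.subRight (1 / 2))
  let ψ : K × K ≃ F :=
    Equiv.ofBijective _ (bijective_mul_two_add_cubeRoot h3 hcard hK hζ (1 / 4))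
  have hcomm : ∀ v : K × K, (φ v + 1) ^ (Fintype.card K + 2) - φ v ^ (Fintype.card K + 2) =
      ψ (v.1 ^ 2, v.2 ^ 2) := by
    rintro ⟨u, v⟩
    rw [add_one_pow_card_add_two_sub h2F (φ (u, v))
      (algebraMap K F u * ζ + algebraMap K F v * ζ ^ 2) _ rfl
      (pow_card_cubeRoot_combination hq hζ u v)]
    change _ = algebraMap K F (u ^ 2) * (2 + ζ ^ 2) + algebraMap K F (v ^ 2) * (2 + ζ) + 1 / 4
    rw [map_pow, map_pow]
    generalize algebraMap K F u = a
    generalize algebraMap K F v = b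
    have hcube : ζ ^ 3 = 1 := by linear_combination (ζ - 1) * hζ
    linear_combination (2 * a ^ 2 + 2 * b ^ 2 + b ^ 2 * ζ) * hcube + 2 * a * b * ζ ^ 2 * hζ
  have hdelta : ∀ w : K × K, deltaF F (Fintype.card K + 2) (ψ w) =
      (Finset.univ.filter (fun v : K × K ↦ (v.1 ^ 2, v.2 ^ 2) = w)).card := by
    intro w
    symm
    apply Finset.card_equiv φ
    intro v
    simp [hcomm]
  rw [← card_pairs_two_sqrt h2]
  symm
  apply Finset.card_equiv ψ
  intro w
  simp only [Finset.mem_filter, Finset.mem_univ, true_and, hdelta]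

/-- Let `p > 3` be prime, `n = 2m`, `p^m ≡ 2 (mod 3)`. For `x^(p^m+2)` over `F_{p^n}`,
the number of `b` with `δ(b) = 2` is exactly `p^m - 1`. -/
theorem stmt15 (p : ℕ) (hp : p.Prime) (hp3 : 3 < p) (m : ℕ) (hm : 0 < m) (n : ℕ)
    (hn : n = 2 * m) (hmod : p ^ m % 3 = 2)
    (F : Type*) [Field F] [Fintype F] [DecidableEq F]
    (hF : Fintype.card F = p ^ n) :
    omegaF F (p ^ m + 2) 2 = p ^ m - 1 := by
  subst hn
  have : Fact p.Prime := ⟨hp⟩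
  have : CharP F p := charP_of_card_eq_prime_pow hF
  let _ : Algebra (ZMod p) F := ZMod.algebra F p
  have hrank : Module.finrank (ZMod p) F = 2 * m := by
    apply Nat.pow_right_injective hp.two_le
    dsimp only
    rw [FiniteField.pow_finrank_eq_card p F, hF]
  obtain ⟨f⟩ : Nonempty (GaloisField p m →ₐ[ZMod p] F) :=
    FiniteField.nonempty_algHom_of_finrank_dvd (by
      rw [hrank, GaloisField.finrank p hm.ne']
      exact dvd_mul_left m 2)
  let _ : Algebra (GaloisField p m) F := f.toRingHom.toAlgebra
  let _ : Fintype (GaloisField p m) := Fintype.ofFinite _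
  have hK : Fintype.card (GaloisField p m) = p ^ m := by
    rw [Fintype.card_eq_nat_card, GaloisField.card p m hm.ne']
  have hne : ∀ k : ℕ, 0 < k → k < p → (k : GaloisField p m) ≠ 0 := fun k hk hkp h ↦
    (Nat.le_of_dvd hk ((CharP.cast_eq_zero_iff _ p k).mp h)).not_gt hkp
  rw [← hK]
  apply omegaF_card_add_two
  · rw [hF, hK, ← pow_mul, mul_comm]
  · rw [hK, hmod]
  · exact_mod_cast hne 2 (by omega) (by omega)
  · exact_mod_cast hne 3 (by omega) hp3
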